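/- Let f, W : ℝ × ℝ × ℝ → ℝ, (t,q,v) ↦ f(t,q,v), W(t,q,v), be smooth, and suppose W satisfies the conservation equation ∂W/∂t + v·∂W/∂q + f·∂W/∂v + W·∂f/∂v = 0 at every point (t,q,v) ∈ ℝ³. Then there exists a smooth Lagrangian L : ℝ × ℝ × ℝ → ℝ with ∂²L/∂v²(t,q,v) = W(t,q,v) such that for every twice continuously differentiable curve q : ℝ → ℝ and every t, EL(L)[q](t) = W(t, q(t), q'(t))·(q''(t) − f(t, q(t), q'(t))). In particular, every twice continuously differentiable solution of the ordinary differential equation q'' = f(t, q, q') is a solution of the Euler–Lagrange equation of L. -/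

import Mathlib

/-- Partial derivative of `L (t,q,v)` with respect to `t`. -/
noncomputable def pt (L : ℝ → ℝ → ℝ → ℝ) : ℝ → ℝ → ℝ → ℝ :=
  fun t q v => deriv (fun s => L s q v) t

/-- Partial derivative of `L (t,q,v)` with respect to `q`. -/
noncomputable def pq (L : ℝ → ℝ → ℝ → ℝ) : ℝ → ℝ → ℝ → ℝ :=
  fun t q v => deriv (fun s => L t s v) q

/-- Partial derivative of `L (t,q,v)` with respect to `v`. -/
noncomputable def pv (L : ℝ → ℝ → ℝ → ℝ) : ℝ → ℝ → ℝ → ℝ :=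
  fun t q v => deriv (fun s => L t q s) v

/-- The Euler–Lagrange expression of the Lagrangian `L` along a curve `q`:
`EL(L)[q](t) = d/dt[∂L/∂v(t, q(t), q'(t))] − ∂L/∂q(t, q(t), q'(t))`. -/
noncomputable def EL (L : ℝ → ℝ → ℝ → ℝ) (q : ℝ → ℝ) (t : ℝ) : ℝ :=
  deriv (fun s => pv L s (q s) (deriv q s)) t - pq L t (q t) (deriv q t)

/-!
Call `D` the Euler–Lagrange expression of a Lagrangian `L` with `q''` replaced by `f`, so that
`EL(L)[q] = D + ∂²L/∂v² · (q'' − f)`. Since partial derivatives commute, `∂D/∂v` is exactly the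
left-hand side of the conservation equation for the density `∂²L/∂v²`. Integrate `W` twice in `v` to
get `L₀` with `∂²L₀/∂v² = W`. Conservation of `W` then makes `D` a function of `(t, q)` alone, and
adding to `L₀` a potential `U(t, q)` with `∂U/∂q = D` cancels it without changing `∂²L₀/∂v²`.
-/

open scoped ContDiff

section ParametricIntegral

universe u

theorem hasFDerivAt_intervalIntegral_of_contDiff {H E : Type*}
    [NormedAddCommGroup H] [NormedSpace ℝ H] [NormedAddCommGroup E] [NormedSpace ℝ E]
    {F : H × ℝ → E} (hF : ContDiff ℝ 1 F) (a b : ℝ) (x₀ : H) :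
    HasFDerivAt (fun x => ∫ s in a..b, F (x, s))
      (∫ s in a..b, (fderiv ℝ F (x₀, s)).comp (ContinuousLinearMap.inl ℝ H ℝ)) x₀ := by
  set F' : H × ℝ → H →L[ℝ] E := fun p => (fderiv ℝ F p).comp (ContinuousLinearMap.inl ℝ H ℝ)
  have hF' : Continuous F' := (hF.continuous_fderiv one_ne_zero).clm_comp continuous_const
  have slice_continuous (x : H) : Continuous fun s : ℝ => (x, s) := by fun_prop
  obtain ⟨C, hC⟩ := isCompact_uIcc.exists_bound_of_continuousOn
    (hF'.comp (slice_continuous x₀)).continuousOn (s := Set.uIcc a b)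
  have bound_near : ∀ᶠ x in nhds x₀, ∀ s ∈ Set.uIcc a b, ‖F' (x, s)‖ < C + 1 := by
    refine isCompact_uIcc.eventually_forall_of_forall_eventually fun s hs => ?_
    exact hF'.norm.continuousAt.eventually_lt_const ((hC s hs).trans_lt (lt_add_one C))
  refine intervalIntegral.hasFDerivAt_integral_of_dominated_of_fderiv_le
    (F := fun x s => F (x, s)) (F' := fun x s => F' (x, s)) (bound := fun _ => C + 1)
    bound_near ?_ ?_ ?_ ?_ intervalIntegrable_const ?_
  · exact .of_forall fun x => (hF.continuous.comp (slice_continuous x)).aestronglyMeasurable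
  · exact (hF.continuous.comp (slice_continuous x₀)).intervalIntegrable a b
  · exact (hF'.comp (slice_continuous x₀)).aestronglyMeasurable
  · exact .of_forall fun s hs x hx => (hx s (Set.uIoc_subset_uIcc hs)).le
  · exact .of_forall fun s _ x _ =>
      (hF.differentiable one_ne_zero (x, s)).hasFDerivAt.comp x (hasFDerivAt_prodMk_left x s)

theorem contDiff_intervalIntegral_nat {H : Type u} [NormedAddCommGroup H] [NormedSpace ℝ H]
    (n : ℕ) (a b : ℝ) {E : Type u} [NormedAddCommGroup E] [NormedSpace ℝ E] {F : H × ℝ → E}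
    (hF : ContDiff ℝ n F) : ContDiff ℝ n (fun x => ∫ s in a..b, F (x, s)) := by
  induction n generalizing E with
  | zero =>
    have hcont : Continuous (Function.uncurry fun x s => F (x, s)) := hF.continuous
    exact contDiff_zero.2
      (intervalIntegral.continuous_parametric_intervalIntegral_of_continuous' hcont a b)
  | succ n ih =>
    have hF' : ContDiff ℝ n fun p => (fderiv ℝ F p).comp (ContinuousLinearMap.inl ℝ H ℝ) :=
      (hF.fderiv_right (by simp)).clm_comp contDiff_const
    exact contDiff_succ_iff_hasFDerivAt.2
      ⟨_, ih hF', hasFDerivAt_intervalIntegral_of_contDiff (hF.of_le (by simp)) a b⟩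

variable {H E : Type u} [NormedAddCommGroup H] [NormedSpace ℝ H]
  [NormedAddCommGroup E] [NormedSpace ℝ E] {n : ℕ∞} {F : H × ℝ → E}

theorem contDiff_intervalIntegral (hF : ContDiff ℝ n F) (a b : ℝ) :
    ContDiff ℝ n (fun x => ∫ s in a..b, F (x, s)) :=
  contDiff_iff_forall_nat_le.2 fun m hm =>
    contDiff_intervalIntegral_nat m a b (hF.of_le (by exact_mod_cast hm))

theorem contDiff_primitive (hF : ContDiff ℝ n F) (a : ℝ) :
    ContDiff ℝ n (fun p : H × ℝ => ∫ s in a..p.2, F (p.1, s)) := by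
  -- Rescaling to `[0, 1]` moves the variable endpoint into the integrand.
  have rescale (p : H × ℝ) : ∫ s in a..p.2, F (p.1, s) =
      (p.2 - a) • ∫ s in (0 : ℝ)..1, F (p.1, a + (p.2 - a) * s) := by
    simp [intervalIntegral.smul_integral_comp_add_mul (fun s => F (p.1, s))]
  simp only [rescale]
  refine (contDiff_snd.sub contDiff_const).smul (contDiff_intervalIntegral
    (F := fun z : (H × ℝ) × ℝ => F (z.1.1, a + (z.1.2 - a) * z.2)) ?_ 0 1)
  exact hF.comp (by fun_prop)

theorem exists_contDiff_primitive [CompleteSpace E] (hF : ContDiff ℝ n F) :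
    ∃ G : H × ℝ → E, ContDiff ℝ n G ∧ ∀ x y, HasDerivAt (fun s => G (x, s)) (F (x, y)) y := by
  refine ⟨_, contDiff_primitive hF 0, fun x y => ?_⟩
  have hcont : Continuous fun s => F (x, s) := hF.continuous.comp (by fun_prop)
  exact hcont.integral_hasStrictDerivAt 0 y |>.hasDerivAt

end ParametricIntegral

theorem fderiv_fderiv_apply_comm {E G : Type*} [NormedAddCommGroup E] [NormedSpace ℝ E]
    [NormedAddCommGroup G] [NormedSpace ℝ G] {f : E → G} {x : E} (hf : ContDiffAt ℝ 2 f x)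
    (u w : E) :
    fderiv ℝ (fun y => fderiv ℝ f y u) x w = fderiv ℝ (fun y => fderiv ℝ f y w) x u := by
  have hf' : DifferentiableAt ℝ (fderiv ℝ f) x :=
    (hf.fderiv_right (m := 1) (by norm_num)).differentiableAt one_ne_zero
  have hsymm : IsSymmSndFDerivAt ℝ f x := hf.isSymmSndFDerivAt (by simp)
  simpa [fderiv_clm_apply hf' (differentiableAt_const _)] using hsymm w u

section PartialDerivatives

variable {F : ℝ → ℝ → ℝ → ℝ} {m n : WithTop ℕ∞}

theorem uncurry_pt (hF : Differentiable ℝ ↿F) : ↿(pt F) = fun p => fderiv ℝ ↿F p (1, 0, 0) :=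
  funext fun p => (HasFDerivAt.comp_hasDerivAt (l := ↿F) p.1 (hF p).hasFDerivAt
    ((hasDerivAt_id p.1).prodMk (hasDerivAt_const p.1 p.2))).deriv

theorem uncurry_pq (hF : Differentiable ℝ ↿F) : ↿(pq F) = fun p => fderiv ℝ ↿F p (0, 1, 0) :=
  funext fun p => (HasFDerivAt.comp_hasDerivAt (l := ↿F) p.2.1 (hF p).hasFDerivAt
    ((hasDerivAt_const p.2.1 p.1).prodMk
      ((hasDerivAt_id p.2.1).prodMk (hasDerivAt_const p.2.1 p.2.2)))).deriv

theorem uncurry_pv (hF : Differentiable ℝ ↿F) : ↿(pv F) = fun p => fderiv ℝ ↿F p (0, 0, 1) :=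
  funext fun p => (HasFDerivAt.comp_hasDerivAt (l := ↿F) p.2.2 (hF p).hasFDerivAt
    ((hasDerivAt_const p.2.2 p.1).prodMk
      ((hasDerivAt_const p.2.2 p.2.1).prodMk (hasDerivAt_id p.2.2)))).deriv

theorem contDiff_pt (hF : ContDiff ℝ n ↿F) (hmn : m + 1 ≤ n) : ContDiff ℝ m ↿(pt F) := by
  rw [uncurry_pt (hF.differentiable (by rintro rfl; simp at hmn))]
  exact (hF.fderiv_right hmn).clm_apply contDiff_const

theorem contDiff_pq (hF : ContDiff ℝ n ↿F) (hmn : m + 1 ≤ n) : ContDiff ℝ m ↿(pq F) := by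
  rw [uncurry_pq (hF.differentiable (by rintro rfl; simp at hmn))]
  exact (hF.fderiv_right hmn).clm_apply contDiff_const

theorem contDiff_pv (hF : ContDiff ℝ n ↿F) (hmn : m + 1 ≤ n) : ContDiff ℝ m ↿(pv F) := by
  rw [uncurry_pv (hF.differentiable (by rintro rfl; simp at hmn))]
  exact (hF.fderiv_right hmn).clm_apply contDiff_const

theorem pv_pt_comm (hF : ContDiff ℝ 2 ↿F) : pv (pt F) = pt (pv F) := by
  have hF₁ : Differentiable ℝ ↿F := hF.differentiable two_ne_zero
  have hpt : Differentiable ℝ ↿(pt F) :=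
    (contDiff_pt (m := 1) hF (by norm_num)).differentiable one_ne_zero
  have hpv : Differentiable ℝ ↿(pv F) :=
    (contDiff_pv (m := 1) hF (by norm_num)).differentiable one_ne_zero
  funext t q v
  calc pv (pt F) t q v
      = fderiv ℝ ↿(pt F) (t, q, v) (0, 0, 1) := congrFun (uncurry_pv hpt) (t, q, v)
    _ = fderiv ℝ ↿(pv F) (t, q, v) (1, 0, 0) := by
      rw [uncurry_pt hF₁, uncurry_pv hF₁, fderiv_fderiv_apply_comm hF.contDiffAt]
    _ = pt (pv F) t q v := (congrFun (uncurry_pt hpv) (t, q, v)).symm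

theorem pv_pq_comm (hF : ContDiff ℝ 2 ↿F) : pv (pq F) = pq (pv F) := by
  have hF₁ : Differentiable ℝ ↿F := hF.differentiable two_ne_zero
  have hpq : Differentiable ℝ ↿(pq F) :=
    (contDiff_pq (m := 1) hF (by norm_num)).differentiable one_ne_zero
  have hpv : Differentiable ℝ ↿(pv F) :=
    (contDiff_pv (m := 1) hF (by norm_num)).differentiable one_ne_zero
  funext t q v
  calc pv (pq F) t q v
      = fderiv ℝ ↿(pq F) (t, q, v) (0, 0, 1) := congrFun (uncurry_pv hpq) (t, q, v)
    _ = fderiv ℝ ↿(pv F) (t, q, v) (0, 1, 0) := by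
      rw [uncurry_pq hF₁, uncurry_pv hF₁, fderiv_fderiv_apply_comm hF.contDiffAt]
    _ = pq (pv F) t q v := (congrFun (uncurry_pq hpv) (t, q, v)).symm

theorem hasDerivAt_comp_curve (hF : Differentiable ℝ ↿F) {a b c : ℝ → ℝ} {a' b' c' s : ℝ}
    (ha : HasDerivAt a a' s) (hb : HasDerivAt b b' s) (hc : HasDerivAt c c' s) :
    HasDerivAt (fun r => F (a r) (b r) (c r))
      (a' * pt F (a s) (b s) (c s) + b' * pq F (a s) (b s) (c s)
        + c' * pv F (a s) (b s) (c s)) s := by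
  set p : ℝ × ℝ × ℝ := (a s, b s, c s)
  have hpt : pt F (a s) (b s) (c s) = fderiv ℝ ↿F p (1, 0, 0) := congrFun (uncurry_pt hF) p
  have hpq : pq F (a s) (b s) (c s) = fderiv ℝ ↿F p (0, 1, 0) := congrFun (uncurry_pq hF) p
  have hpv : pv F (a s) (b s) (c s) = fderiv ℝ ↿F p (0, 0, 1) := congrFun (uncurry_pv hF) p
  have hvelocity : (a', b', c') =
      a' • ((1, 0, 0) : ℝ × ℝ × ℝ) + b' • ((0, 1, 0) : ℝ × ℝ × ℝ) + c' • (0, 0, 1) := by simp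
  refine (HasFDerivAt.comp_hasDerivAt (l := ↿F) s (hF p).hasFDerivAt
    (ha.prodMk (hb.prodMk hc))).congr_deriv ?_
  rw [hpt, hpq, hpv, hvelocity]
  simp only [map_add, map_smul, smul_eq_mul]

theorem hasDerivAt_pq (hF : Differentiable ℝ ↿F) (t q v : ℝ) :
    HasDerivAt (fun s => F t s v) (pq F t q v) q := by
  simpa using hasDerivAt_comp_curve hF (hasDerivAt_const q t) (hasDerivAt_id q)
    (hasDerivAt_const q v)

theorem hasDerivAt_pv (hF : Differentiable ℝ ↿F) (t q v : ℝ) :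
    HasDerivAt (fun s => F t q s) (pv F t q v) v := by
  simpa using hasDerivAt_comp_curve hF (hasDerivAt_const v t) (hasDerivAt_const v q)
    (hasDerivAt_id v)

theorem exists_contDiff_pv_eq {n : ℕ∞} (hF : ContDiff ℝ n ↿F) :
    ∃ G : ℝ → ℝ → ℝ → ℝ, ContDiff ℝ n ↿G ∧ pv G = F := by
  have hF_assoc : ContDiff ℝ n fun p : (ℝ × ℝ) × ℝ => F p.1.1 p.1.2 p.2 :=
    hF.comp (f := fun p : (ℝ × ℝ) × ℝ => (p.1.1, p.1.2, p.2)) (by fun_prop)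
  obtain ⟨G, hG, hGderiv⟩ := exists_contDiff_primitive hF_assoc
  refine ⟨fun t q v => G ((t, q), v), ?_, ?_⟩
  · exact hG.comp (f := fun p : ℝ × ℝ × ℝ => ((p.1, p.2.1), p.2.2)) (by fun_prop)
  · funext t q v
    exact (hGderiv (t, q) v).deriv

end PartialDerivatives

/-- The Euler–Lagrange expression of `L` as a function on the space of `(t, q, v)`, with the
acceleration replaced by `f t q v`. It vanishes identically when the solutions of `q'' = f(t,q,q')`
are extremals of `L`. -/
noncomputable def onShellEL (f L : ℝ → ℝ → ℝ → ℝ) (t q v : ℝ) : ℝ :=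
  pt (pv L) t q v + v * pq (pv L) t q v + f t q v * pv (pv L) t q v - pq L t q v

section OnShellEL

variable {f L : ℝ → ℝ → ℝ → ℝ}

theorem EL_eq_onShellEL_add (f : ℝ → ℝ → ℝ → ℝ) (hL : ContDiff ℝ 2 ↿L) {q : ℝ → ℝ}
    (hq : ContDiff ℝ 2 q) (t : ℝ) :
    EL L q t = onShellEL f L t (q t) (deriv q t)
      + pv (pv L) t (q t) (deriv q t) * (deriv (deriv q) t - f t (q t) (deriv q t)) := by
  have hpv : Differentiable ℝ ↿(pv L) :=
    (contDiff_pv (m := 1) hL (by norm_num)).differentiable one_ne_zero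
  have hq₁ : HasDerivAt q (deriv q t) t := (hq.differentiable two_ne_zero t).hasDerivAt
  have hq₂ : HasDerivAt (deriv q) (deriv (deriv q) t) t :=
    (hq.differentiable_deriv_two t).hasDerivAt
  have hmomentum := hasDerivAt_comp_curve hpv (hasDerivAt_id' t) hq₁ hq₂
  rw [EL, hmomentum.deriv, onShellEL]
  ring

theorem contDiff_onShellEL {m n : WithTop ℕ∞} (hf : ContDiff ℝ m ↿f) (hL : ContDiff ℝ n ↿L)
    (hmn : m + 2 ≤ n) : ContDiff ℝ m ↿(onShellEL f L) := by
  rw [← one_add_one_eq_two, ← add_assoc] at hmn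
  have hpv : ContDiff ℝ (m + 1) ↿(pv L) := contDiff_pv hL hmn
  have hv : ContDiff ℝ m fun p : ℝ × ℝ × ℝ => p.2.2 := by fun_prop
  exact (((contDiff_pt hpv le_rfl).add (hv.mul (contDiff_pq hpv le_rfl))).add
    (hf.mul (contDiff_pv hpv le_rfl))).sub (contDiff_pq hL (le_self_add.trans hmn))

theorem pv_onShellEL (hf : Differentiable ℝ ↿f) (hL : ContDiff ℝ 3 ↿L) (t q v : ℝ) :
    pv (onShellEL f L) t q v =
      pt (pv (pv L)) t q v + v * pq (pv (pv L)) t q v + f t q v * pv (pv (pv L)) t q v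
        + pv (pv L) t q v * pv f t q v := by
  have hpv : ContDiff ℝ 2 ↿(pv L) := contDiff_pv hL (by norm_num)
  have hpt_pv := (contDiff_pt (m := 1) hpv (by norm_num)).differentiable one_ne_zero
  have hpq_pv := (contDiff_pq (m := 1) hpv (by norm_num)).differentiable one_ne_zero
  have hpv_pv := (contDiff_pv (m := 1) hpv (by norm_num)).differentiable one_ne_zero
  have hpq := (contDiff_pq (m := 2) hL (by norm_num)).differentiable two_ne_zero
  have hderiv := (((hasDerivAt_pv hpt_pv t q v).add
    ((hasDerivAt_id' v).mul (hasDerivAt_pv hpq_pv t q v))).add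
    ((hasDerivAt_pv hf t q v).mul (hasDerivAt_pv hpv_pv t q v))).sub (hasDerivAt_pv hpq t q v)
  refine hderiv.deriv.trans ?_
  rw [pv_pt_comm hpv, pv_pq_comm hpv, pv_pq_comm (hL.of_le (by norm_num))]
  ring

theorem onShellEL_eq_of_conserved (hf : ContDiff ℝ 1 ↿f) (hL : ContDiff ℝ 3 ↿L)
    (hcons : ∀ t q v, pt (pv (pv L)) t q v + v * pq (pv (pv L)) t q v
      + f t q v * pv (pv (pv L)) t q v + pv (pv L) t q v * pv f t q v = 0) (t q v w : ℝ) :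
    onShellEL f L t q v = onShellEL f L t q w := by
  have hdiff : Differentiable ℝ ↿(onShellEL f L) :=
    (contDiff_onShellEL hf hL (by norm_num)).differentiable one_ne_zero
  refine is_const_of_deriv_eq_zero (f := onShellEL f L t q)
    (fun x => (hasDerivAt_pv hdiff t q x).differentiableAt) (fun x => ?_) v w
  exact (pv_onShellEL (hf.differentiable one_ne_zero) hL t q x).trans (hcons t q x)

theorem pv_add_potential (L : ℝ → ℝ → ℝ → ℝ) (U : ℝ → ℝ → ℝ) :
    pv (fun t q v => L t q v + U t q) = pv L := by
  funext t q v
  exact deriv_add_const (U t q)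

theorem onShellEL_add_potential (f : ℝ → ℝ → ℝ → ℝ) (hL : Differentiable ℝ ↿L) {U : ℝ → ℝ → ℝ}
    {t q u : ℝ} (hU : HasDerivAt (U t) u q) (v : ℝ) :
    onShellEL f (fun t q v => L t q v + U t q) t q v = onShellEL f L t q v - u := by
  have hpq : pq (fun t q v => L t q v + U t q) t q v = pq L t q v + u :=
    ((hasDerivAt_pq hL t q v).add hU).deriv
  rw [onShellEL, pv_add_potential, hpq, onShellEL]
  ring

end OnShellEL

/-- A conserved presymplectic density `W` for the ODE `q'' = f(t,q,q')` yields a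
Lagrangian `L` with `∂²L/∂v² = W` and `EL(L)[q] = W·(q'' − f)` along every `C²` curve;
in particular every `C²` solution of `q'' = f(t,q,q')` solves the Euler–Lagrange
equation of `L`. -/
theorem conserved_presymplectic_implies_multiplier_lagrangian
    (f W : ℝ → ℝ → ℝ → ℝ)
    (hf : ContDiff ℝ (⊤ : ℕ∞) (fun p : ℝ × ℝ × ℝ => f p.1 p.2.1 p.2.2))
    (hW : ContDiff ℝ (⊤ : ℕ∞) (fun p : ℝ × ℝ × ℝ => W p.1 p.2.1 p.2.2))
    (hcons : ∀ t q v : ℝ,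
      pt W t q v + v * pq W t q v + f t q v * pv W t q v + W t q v * pv f t q v = 0) :
    ∃ L : ℝ → ℝ → ℝ → ℝ,
      ContDiff ℝ (⊤ : ℕ∞) (fun p : ℝ × ℝ × ℝ => L p.1 p.2.1 p.2.2) ∧
      (∀ t q v : ℝ, pv (pv L) t q v = W t q v) ∧
      (∀ q : ℝ → ℝ, ContDiff ℝ 2 q → ∀ t : ℝ,
        EL L q t = W t (q t) (deriv q t) * (deriv (deriv q) t - f t (q t) (deriv q t))) ∧
      (∀ q : ℝ → ℝ, ContDiff ℝ 2 q →
        (∀ t : ℝ, deriv (deriv q) t = f t (q t) (deriv q t)) →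
        ∀ t : ℝ, EL L q t = 0) := by
  obtain ⟨A, hA, hpvA⟩ := exists_contDiff_pv_eq (F := W) hW
  obtain ⟨L₀, hL₀, hpvL₀⟩ := exists_contDiff_pv_eq hA
  have hWL₀ : pv (pv L₀) = W := by rw [hpvL₀, hpvA]
  have hindep : ∀ t q v, onShellEL f L₀ t q v = onShellEL f L₀ t q 0 := fun t q v =>
    onShellEL_eq_of_conserved (hf.of_le (by norm_cast)) (hL₀.of_le (by norm_cast))
      (by rwa [hWL₀]) t q v 0
  have hD : ContDiff ℝ ∞ fun p : ℝ × ℝ => onShellEL f L₀ p.1 p.2 0 :=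
    (contDiff_onShellEL hf hL₀ le_rfl).comp (f := fun p : ℝ × ℝ => (p.1, p.2, 0)) (by fun_prop)
  obtain ⟨U, hU, hUderiv⟩ := exists_contDiff_primitive hD
  set L : ℝ → ℝ → ℝ → ℝ := fun t q v => L₀ t q v + U (t, q)
  have hL : ContDiff ℝ ∞ ↿L :=
    hL₀.add (hU.comp (f := fun p : ℝ × ℝ × ℝ => (p.1, p.2.1)) (by fun_prop))
  have hWL : pv (pv L) = W := (congrArg pv (pv_add_potential L₀ _)).trans hWL₀
  have hshell : ∀ t q v, onShellEL f L t q v = 0 := fun t q v => by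
    rw [onShellEL_add_potential f (hL₀.differentiable (by simp)) (hUderiv t q), hindep, sub_self]
  have hEL : ∀ q : ℝ → ℝ, ContDiff ℝ 2 q → ∀ t : ℝ,
      EL L q t = W t (q t) (deriv q t) * (deriv (deriv q) t - f t (q t) (deriv q t)) := by
    intro q hq t
    rw [EL_eq_onShellEL_add f (hL.of_le (by norm_cast)) hq, hshell, hWL, zero_add]
  refine ⟨L, hL, fun t q v => by rw [hWL], hEL, fun q hq hsol t => ?_⟩
  rw [hEL q hq, hsol, sub_self, mul_zero]
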